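/- For every fixed constant c_0 > 0 there exists a constant C_0 ≥ 1 depending only on c_0 such that for every positive integer n, every β ≥ c_0, every j ∈ [n], and every positive integer u, one has P(N_j ≥ 1 + u) ≤ C_0 (2 e^{-2β} / (1 - e^{-2β}))^u. -/

import Mathlib

/-!
Write `q = e^{-2β}`, `x = 2q / (1 - q)` and `y = 2 / (1 - q)`. If `x ≥ 1` the bound is trivial, so let
`x ≤ 1`, which gives `q ≤ 1/3` and `y ≤ 3`. The constant `C₀ = e³` then works.

Condition on `σ₀ = σ` and let `c` be the number of `k < j` with `σ k ≥ j` (crossings of the cut before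
`j`). The other candidates for `H_j` are the `k < j` with `σ k < j`; they belong to `H_j` independently
with probability `q^(j - max k (σ k))`, and these probabilities sum to at most `x` because each value of
`max k (σ k)` occurs at most twice. A union bound over subsets gives the conditional tail
`P(#H_j ≥ u | σ₀ = σ) ≤ x^(u - c)` (`pi_tail_le`).

It remains to control `c`. Transposing an upward crossing `a` with a downward crossing `k` lowers `c` by
one and changes the Mallows weight by a factor which is a product of a power of `q` for `a` and one for
`k` (`weight_swap`). Counting all `w²` pairs in a permutation with `c = w` yields
`w² P(c = w) ≤ x y P(c = w - 1)` (`levelWeight_succ_le`), hence `P(c = w) ≤ (x y)^w / w!`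
(`levelWeight_le`). Summing over `w`, `P(#H_j ≥ u) ≤ x^u ∑ y^w / w! ≤ e^y x^u ≤ e³ x^u`.
-/

open scoped BigOperators Classical ENNReal
open MeasureTheory

/-- The (unnormalized) Mallows weight `exp(-β ∑ᵢ |σ(i) - i|)` for the `L¹` distance.
Permutations of `[n] = {1, …, n}` are modeled as permutations of `Fin n`. -/
noncomputable def mallowsWeight (n : ℕ) (β : ℝ) (σ : Equiv.Perm (Fin n)) : ℝ :=
  Real.exp (-β * ∑ i : Fin n, |((σ i : ℕ) : ℝ) - ((i : ℕ) : ℝ)|)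

/-- The probability of `σ` under the Mallows permutation model `P_{n,β}`. -/
noncomputable def mallowsProb (n : ℕ) (β : ℝ) (σ : Equiv.Perm (Fin n)) : ℝ :=
  mallowsWeight n β σ / ∑ τ : Equiv.Perm (Fin n), mallowsWeight n β τ

instance (n : ℕ) : MeasurableSpace (Equiv.Perm (Fin n)) := ⊤

/-- The Mallows model `P_{n,β}` as a measure on `S_n`. -/
noncomputable def mallowsMeasure (n : ℕ) (β : ℝ) : Measure (Equiv.Perm (Fin n)) :=
  ∑ σ : Equiv.Perm (Fin n),
    ENNReal.ofReal (mallowsProb n β σ) • MeasureTheory.Measure.dirac σ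

/-- The probability space carrying `σ₀ ~ P_{n,β}` together with `n` i.i.d. exponential
random variables `E₁, …, E_n` of rate `2β`, independent of `σ₀`.  A sample point is
`ω = (σ₀, (E_k)_{k ∈ [n]})`. -/
noncomputable def hitRunMeasure (n : ℕ) (β : ℝ) :
    Measure (Equiv.Perm (Fin n) × (Fin n → ℝ)) :=
  (mallowsMeasure n β).prod
    (Measure.pi fun _ : Fin n => ProbabilityTheory.expMeasure (2 * β))

/-- `b_k = max{k, σ₀(k)} + E_k` (so that, conditionally on `σ₀`,
`P(b_k ≥ x | σ₀) = exp(-2β (x - max{k, σ₀(k)})₊)`).  In `Fin n` coordinates all the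
`b_k` and the thresholds `j` are shifted by one simultaneously. -/
noncomputable def bVal (n : ℕ) (ω : Equiv.Perm (Fin n) × (Fin n → ℝ)) (k : Fin n) : ℝ :=
  max ((k : ℕ) : ℝ) ((ω.1 k : ℕ) : ℝ) + ω.2 k

/-- `H_j = {k ∈ [n] : k ≤ j - 1, b_k ≥ j}`. -/
noncomputable def Hset (n : ℕ) (ω : Equiv.Perm (Fin n) × (Fin n → ℝ)) (j : Fin n) :
    Finset (Fin n) :=
  Finset.univ.filter fun k => k < j ∧ ((j : ℕ) : ℝ) ≤ bVal n ω k

/-- `N_j = 1 + #{k ∈ [n] : k ≤ j - 1, b_k ≥ j}`. -/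
noncomputable def Nval (n : ℕ) (ω : Equiv.Perm (Fin n) × (Fin n → ℝ)) (j : Fin n) : ℕ :=
  1 + (Hset n ω j).card

namespace Mallows
open Finset

/-! ### Elementary symmetric and geometric sums -/

/-- The elementary symmetric polynomial `e_v` of nonnegative reals is at most `(∑ p)^v`. -/
lemma sum_powersetCard_prod_le {ι : Type*} [DecidableEq ι] (s : Finset ι) (p : ι → ℝ) (hp : ∀ i, 0 ≤ p i) (v : ℕ) :
    ∑ S ∈ s.powersetCard v, ∏ i ∈ S, p i ≤ (∑ i ∈ s, p i) ^ v := by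
  induction s using Finset.induction_on generalizing v with
  | empty =>
    cases v with
    | zero => simp
    | succ v => rw [Finset.powersetCard_eq_empty.2 (by simp)]; simp
  | insert a s ha ih =>
    cases v with
    | zero => simp
    | succ v =>
      have hA : 0 ≤ ∑ i ∈ s, p i := Finset.sum_nonneg fun i _ => hp i
      have hinj : Set.InjOn (insert a) (s.powersetCard v : Set (Finset ι)) := by
        intro S hS T hT h
        have hS' : a ∉ S := fun h' => ha ((Finset.mem_powersetCard.1 hS).1 h')
        have hT' : a ∉ T := fun h' => ha ((Finset.mem_powersetCard.1 hT).1 h')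
        rw [← Finset.erase_insert hS', ← Finset.erase_insert hT', h]
      rw [Finset.powersetCard_succ_insert ha, Finset.sum_union, Finset.sum_image hinj,
        Finset.sum_insert ha]
      · have h1 : ∑ S ∈ s.powersetCard v, ∏ i ∈ insert a S, p i
            = p a * ∑ S ∈ s.powersetCard v, ∏ i ∈ S, p i := by
          rw [Finset.mul_sum]
          refine Finset.sum_congr rfl fun S hS => ?_
          exact Finset.prod_insert fun h' => ha ((Finset.mem_powersetCard.1 hS).1 h')
        rw [h1]
        calc _ ≤ (∑ i ∈ s, p i) ^ (v + 1) + p a * (∑ i ∈ s, p i) ^ v :=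
              add_le_add (ih _) (mul_le_mul_of_nonneg_left (ih _) (hp a))
          _ = (p a + ∑ i ∈ s, p i) * (∑ i ∈ s, p i) ^ v := by ring
          _ ≤ (p a + ∑ i ∈ s, p i) * (p a + ∑ i ∈ s, p i) ^ v := by
              have := hp a
              gcongr
              linarith
          _ = _ := by ring
      · rw [Finset.disjoint_left]
        intro S hS hS'
        obtain ⟨T, -, rfl⟩ := Finset.mem_image.1 hS'
        exact ha ((Finset.mem_powersetCard.1 hS).1 (Finset.mem_insert_self a T))

lemma sum_pow_le {ι : Type*} (s : Finset ι) (f : ι → ℕ) (hf : Set.InjOn f s) {q : ℝ}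
    (h0 : 0 ≤ q) (h1 : q < 1) : ∑ i ∈ s, q ^ f i ≤ (1 - q)⁻¹ := by
  rw [← Finset.sum_image (f := fun m => q ^ m) hf, ← tsum_geometric_of_lt_one h0 h1]
  exact (summable_geometric_of_lt_one h0 h1).sum_le_tsum _ fun i _ => pow_nonneg h0 i

variable {n : ℕ}

/-! ### Crossings of a cut -/

/-- Positions below `j` whose value is at least `j` (upward crossings of the cut before `j`). These
`k` always belong to `H_j`, up to the null event `E_k < 0`. -/
def up (j : Fin n) (σ : Equiv.Perm (Fin n)) : Finset (Fin n) :=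
  univ.filter fun k => k < j ∧ j ≤ σ k

/-- Positions at or above `j` whose value is below `j` (downward crossings). -/
def down (j : Fin n) (σ : Equiv.Perm (Fin n)) : Finset (Fin n) :=
  univ.filter fun k => j ≤ k ∧ σ k < j

/-- Positions below `j` whose value is also below `j`. -/
def low (j : Fin n) (σ : Equiv.Perm (Fin n)) : Finset (Fin n) :=
  univ.filter fun k => k < j ∧ σ k < j

/-- Positions at or above `j` whose value is also at or above `j`. -/
def high (j : Fin n) (σ : Equiv.Perm (Fin n)) : Finset (Fin n) :=
  univ.filter fun k => j ≤ k ∧ j ≤ σ k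

lemma mem_up {j : Fin n} {σ : Equiv.Perm (Fin n)} {k : Fin n} :
    k ∈ up j σ ↔ k < j ∧ j ≤ σ k := by simp [up]

lemma mem_down {j : Fin n} {σ : Equiv.Perm (Fin n)} {k : Fin n} :
    k ∈ down j σ ↔ j ≤ k ∧ σ k < j := by simp [down]

lemma mem_low {j : Fin n} {σ : Equiv.Perm (Fin n)} {k : Fin n} :
    k ∈ low j σ ↔ k < j ∧ σ k < j := by simp [low]

lemma mem_high {j : Fin n} {σ : Equiv.Perm (Fin n)} {k : Fin n} :
    k ∈ high j σ ↔ j ≤ k ∧ j ≤ σ k := by simp [high]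

lemma card_down (j : Fin n) (σ : Equiv.Perm (Fin n)) : (down j σ).card = (up j σ).card := by
  have h1 : (up j σ).card + (low j σ).card = (univ.filter fun k : Fin n => k < j).card := by
    rw [← Finset.card_union_of_disjoint]
    · congr 1; ext k; simp [up, low]; grind
    · rw [Finset.disjoint_left]; intro k; simp [up, low]; grind
  have h2 : (down j σ).card + (low j σ).card = (univ.filter fun k : Fin n => σ k < j).card := by
    rw [← Finset.card_union_of_disjoint]
    · congr 1; ext k; simp [down, low]; grind
    · rw [Finset.disjoint_left]; intro k; simp [down, low]; grind
  have h3 : (univ.filter fun k : Fin n => σ k < j).card = (univ.filter fun k : Fin n => k < j).card :=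
    Finset.card_equiv σ (by simp)
  omega

/-- Each value of `max k (σ k)` is attained at most twice, whence the factor `2`; the exponents
are at least `1`. -/
lemma sum_low_le (j : Fin n) (σ : Equiv.Perm (Fin n)) {q : ℝ} (h0 : 0 ≤ q) (h1 : q < 1) :
    ∑ k ∈ low j σ, q ^ ((j : ℕ) - max (k : ℕ) (σ k)) ≤ 2 * q / (1 - q) := by
  have hA : ∑ k ∈ low j σ, q ^ ((j : ℕ) - 1 - (k : ℕ)) ≤ (1 - q)⁻¹ := by
    refine sum_pow_le _ _ ?_ h0 h1
    intro a ha b hb h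
    simp only [low, Finset.coe_filter, Finset.mem_univ, true_and, Set.mem_ofPred_eq,
      Fin.lt_def] at ha hb h
    exact Fin.ext (by omega)
  have hB : ∑ k ∈ low j σ, q ^ ((j : ℕ) - 1 - (σ k : ℕ)) ≤ (1 - q)⁻¹ := by
    refine sum_pow_le _ _ ?_ h0 h1
    intro a ha b hb h
    simp only [low, Finset.coe_filter, Finset.mem_univ, true_and, Set.mem_ofPred_eq,
      Fin.lt_def] at ha hb h
    exact σ.injective (Fin.ext (by omega))
  calc ∑ k ∈ low j σ, q ^ ((j : ℕ) - max (k : ℕ) (σ k))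
      ≤ ∑ k ∈ low j σ, (q * q ^ ((j : ℕ) - 1 - (k : ℕ)) + q * q ^ ((j : ℕ) - 1 - (σ k : ℕ))) := by
        refine Finset.sum_le_sum fun k hk => ?_
        simp only [low, Finset.mem_filter, Finset.mem_univ, true_and, Fin.lt_def] at hk
        rw [← pow_succ', ← pow_succ']
        have p1 : 0 ≤ q ^ ((j : ℕ) - 1 - (k : ℕ) + 1) := by positivity
        have p2 : 0 ≤ q ^ ((j : ℕ) - 1 - (σ k : ℕ) + 1) := by positivity
        rcases max_cases (k : ℕ) (σ k : ℕ) with ⟨h, h'⟩ | ⟨h, h'⟩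
        · rw [h, show (j : ℕ) - k = (j : ℕ) - 1 - k + 1 by omega]; linarith
        · rw [h, show (j : ℕ) - σ k = (j : ℕ) - 1 - σ k + 1 by omega]; linarith
    _ ≤ q * (1 - q)⁻¹ + q * (1 - q)⁻¹ := by
        rw [Finset.sum_add_distrib, ← Finset.mul_sum, ← Finset.mul_sum]
        gcongr
    _ = _ := by ring

/-- The counterpart of `sum_low_le` on the other side of the cut, where the exponent `0` occurs. -/
lemma sum_high_le (j : Fin n) (σ : Equiv.Perm (Fin n)) {q : ℝ} (h0 : 0 ≤ q) (h1 : q < 1) :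
    ∑ k ∈ high j σ, q ^ (min (k : ℕ) (σ k) - (j : ℕ)) ≤ 2 / (1 - q) := by
  have hA : ∑ k ∈ high j σ, q ^ ((k : ℕ) - (j : ℕ)) ≤ (1 - q)⁻¹ := by
    refine sum_pow_le _ _ ?_ h0 h1
    intro a ha b hb h
    simp only [high, Finset.coe_filter, Finset.mem_univ, true_and, Set.mem_ofPred_eq,
      Fin.le_def] at ha hb h
    exact Fin.ext (by omega)
  have hB : ∑ k ∈ high j σ, q ^ ((σ k : ℕ) - (j : ℕ)) ≤ (1 - q)⁻¹ := by
    refine sum_pow_le _ _ ?_ h0 h1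
    intro a ha b hb h
    simp only [high, Finset.coe_filter, Finset.mem_univ, true_and, Set.mem_ofPred_eq,
      Fin.le_def] at ha hb h
    exact σ.injective (Fin.ext (by omega))
  calc ∑ k ∈ high j σ, q ^ (min (k : ℕ) (σ k) - (j : ℕ))
      ≤ ∑ k ∈ high j σ, (q ^ ((k : ℕ) - (j : ℕ)) + q ^ ((σ k : ℕ) - (j : ℕ))) := by
        refine Finset.sum_le_sum fun k hk => ?_
        have p1 : 0 ≤ q ^ ((k : ℕ) - (j : ℕ)) := by positivity
        have p2 : 0 ≤ q ^ ((σ k : ℕ) - (j : ℕ)) := by positivity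
        rcases min_cases (k : ℕ) (σ k : ℕ) with ⟨h, h'⟩ | ⟨h, h'⟩ <;> rw [h] <;> linarith
    _ ≤ (1 - q)⁻¹ + (1 - q)⁻¹ := by
        rw [Finset.sum_add_distrib]
        gcongr
    _ = _ := by ring

/-! ### The swap and the tail of the number of crossings -/

/-- Exchanging the values at a position `a` below the cut and a position `k` above it creates one
upward and one downward crossing. The `L¹` distance grows by `2 (min k (σ k) - max a (σ a))`, split
here at `j` into a contribution from each side of the cut. -/
lemma weight_swap (β : ℝ) (j : Fin n) (σ : Equiv.Perm (Fin n)) {a k : Fin n}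
    (ha : a ∈ low j σ) (hk : k ∈ high j σ) :
    mallowsWeight n β (σ * Equiv.swap a k) = mallowsWeight n β σ *
      (Real.exp (-(2 * β)) ^ ((j : ℕ) - max (a : ℕ) (σ a)) *
        Real.exp (-(2 * β)) ^ (min (k : ℕ) (σ k) - (j : ℕ))) := by
  simp only [low, high, Finset.mem_filter, Finset.mem_univ, true_and, Fin.lt_def,
    Fin.le_def] at ha hk
  have hne : a ≠ k := by rintro rfl; omega
  unfold mallowsWeight
  rw [← pow_add, ← Real.exp_nat_mul, ← Real.exp_add]
  congr 1
  rw [Nat.cast_add, Nat.cast_sub (by omega), Nat.cast_sub (by omega)]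
  have hk' : k ∈ univ.erase a := by simp [hne.symm]
  rw [← Finset.add_sum_erase _ _ (Finset.mem_univ a), ← Finset.add_sum_erase _ _ hk',
    ← Finset.add_sum_erase univ (fun i => |((σ i : ℕ) : ℝ) - ((i : ℕ) : ℝ)|) (Finset.mem_univ a),
    ← Finset.add_sum_erase _ (fun i => |((σ i : ℕ) : ℝ) - ((i : ℕ) : ℝ)|) hk']
  have hrest : ∑ i ∈ (univ.erase a).erase k,
        |(((σ * Equiv.swap a k) i : ℕ) : ℝ) - ((i : ℕ) : ℝ)|
      = ∑ i ∈ (univ.erase a).erase k, |((σ i : ℕ) : ℝ) - ((i : ℕ) : ℝ)| := by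
    refine Finset.sum_congr rfl fun i hi => ?_
    simp only [Finset.mem_erase, Finset.mem_univ, and_true] at hi
    rw [Equiv.Perm.mul_apply, Equiv.swap_apply_of_ne_of_ne hi.2 hi.1]
  rw [hrest, Equiv.Perm.mul_apply, Equiv.Perm.mul_apply, Equiv.swap_apply_left,
    Equiv.swap_apply_right]
  have r1 : ((a : ℕ) : ℝ) < (j : ℕ) := by exact_mod_cast ha.1
  have r2 : ((σ a : ℕ) : ℝ) < (j : ℕ) := by exact_mod_cast ha.2
  have r3 : ((j : ℕ) : ℝ) ≤ (k : ℕ) := by exact_mod_cast hk.1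
  have r4 : ((j : ℕ) : ℝ) ≤ (σ k : ℕ) := by exact_mod_cast hk.2
  push_cast
  generalize ∑ i ∈ (univ.erase a).erase k, |((σ i : ℕ) : ℝ) - ((i : ℕ) : ℝ)| = R
  rw [abs_of_nonneg (show (0:ℝ) ≤ ((σ k : ℕ) : ℝ) - ((a : ℕ) : ℝ) by linarith),
    abs_of_nonpos (show ((σ a : ℕ) : ℝ) - ((k : ℕ) : ℝ) ≤ 0 by linarith)]
  rcases le_total ((a : ℕ) : ℝ) (σ a : ℕ) with h | h <;>
  rcases le_total ((k : ℕ) : ℝ) (σ k : ℕ) with h' | h'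
  · rw [max_eq_right h, min_eq_left h', abs_of_nonneg (by linarith), abs_of_nonneg (by linarith)]; ring
  · rw [max_eq_right h, min_eq_right h', abs_of_nonneg (by linarith), abs_of_nonpos (by linarith)]; ring
  · rw [max_eq_left h, min_eq_left h', abs_of_nonpos (by linarith), abs_of_nonneg (by linarith)]; ring
  · rw [max_eq_left h, min_eq_right h', abs_of_nonpos (by linarith), abs_of_nonpos (by linarith)]; ring

lemma card_up_swap (j : Fin n) (σ : Equiv.Perm (Fin n)) {a k : Fin n}
    (ha : a ∈ low j σ) (hk : k ∈ high j σ) :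
    (up j (σ * Equiv.swap a k)).card = (up j σ).card + 1 := by
  simp only [low, high, Finset.mem_filter, Finset.mem_univ, true_and] at ha hk
  have : up j (σ * Equiv.swap a k) = insert a (up j σ) := by
    ext i
    simp only [mem_up, Finset.mem_insert, Equiv.Perm.mul_apply]
    by_cases h1 : i = a
    · subst h1; simp [ha, hk]
    by_cases h2 : i = k
    · subst h2; simp [hk, h1]
    rw [Equiv.swap_apply_of_ne_of_ne h1 h2]; simp [h1]
  rw [this, Finset.card_insert_of_notMem]
  simp [up, ha]

/-- Total Mallows weight of the permutations with exactly `w` upward crossings of the cut. -/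
noncomputable def levelWeight (β : ℝ) (j : Fin n) (w : ℕ) : ℝ :=
  ∑ σ : Equiv.Perm (Fin n), if (up j σ).card = w then mallowsWeight n β σ else 0

lemma weight_pos (β : ℝ) (σ : Equiv.Perm (Fin n)) : 0 < mallowsWeight n β σ := Real.exp_pos _

/-- The recursion behind the tail bound on the number of crossings. A permutation with `w + 1` upward
crossings has `(w + 1)²` pairs (upward crossing, downward crossing); undoing the crossing of such a
pair by a transposition gives a permutation with `w` crossings, and the weights of all
reverse moves out of the latter sum to a product of two geometric series. -/
lemma levelWeight_succ_le {β : ℝ} (hβ : 0 < β) (j : Fin n) (w : ℕ) :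
    ((w : ℝ) + 1) ^ 2 * levelWeight β j (w + 1) ≤
      (2 * Real.exp (-(2 * β)) / (1 - Real.exp (-(2 * β)))) * (2 / (1 - Real.exp (-(2 * β)))) *
        levelWeight β j w := by
  set q := Real.exp (-(2 * β)) with hq
  have h0 : 0 ≤ q := (Real.exp_pos _).le
  have h1 : q < 1 := by rw [hq, Real.exp_lt_one_iff]; linarith
  have hL : ((w : ℝ) + 1) ^ 2 * levelWeight β j (w + 1) =
      ∑ σ : Equiv.Perm (Fin n), ∑ a, ∑ k, if (up j σ).card = w + 1 ∧ a ∈ up j σ ∧ k ∈ down j σ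
        then mallowsWeight n β σ else 0 := by
    unfold levelWeight
    rw [Finset.mul_sum]
    refine Finset.sum_congr rfl fun σ _ => ?_
    by_cases h : (up j σ).card = w + 1
    · have hd := card_down j σ
      simp only [h, true_and, if_true, ite_and]
      simp only [Finset.sum_ite_irrel, Finset.sum_const_zero, Finset.sum_ite_mem,
        Finset.univ_inter]
      simp only [Finset.sum_const, nsmul_eq_mul, hd, h]
      push_cast
      ring
    · simp [h]
  have hmid : ∀ a k : Fin n, (∑ σ : Equiv.Perm (Fin n),
        if (up j σ).card = w + 1 ∧ a ∈ up j σ ∧ k ∈ down j σ then mallowsWeight n β σ else 0) =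
      ∑ σ : Equiv.Perm (Fin n), if (up j σ).card = w ∧ a ∈ low j σ ∧ k ∈ high j σ then
        mallowsWeight n β σ * (q ^ ((j : ℕ) - max (a : ℕ) (σ a)) *
          q ^ (min (k : ℕ) (σ k) - (j : ℕ))) else 0 := by
    intro a k
    rw [← Equiv.sum_comp (Equiv.mulRight (Equiv.swap a k))]
    refine Finset.sum_congr rfl fun σ _ => ?_
    have hmem : (a ∈ up j (σ * Equiv.swap a k) ∧ k ∈ down j (σ * Equiv.swap a k)) ↔
        (a ∈ low j σ ∧ k ∈ high j σ) := by
      simp only [mem_up, mem_down, mem_low, mem_high, Equiv.Perm.mul_apply,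
        Equiv.swap_apply_left, Equiv.swap_apply_right]
      tauto
    by_cases h : ((up j σ).card = w ∧ a ∈ low j σ ∧ k ∈ high j σ)
    · have hc := card_up_swap j σ h.2.1 h.2.2
      exact (if_pos ⟨by rw [Equiv.coe_mulRight, hc, h.1], hmem.2 h.2⟩).trans
        ((weight_swap β j σ h.2.1 h.2.2).trans (if_pos h).symm)
    · refine (if_neg fun h' => h ?_).trans (if_neg h).symm
      have h2 := hmem.1 h'.2
      have hc := card_up_swap j σ h2.1 h2.2
      have h3 : (up j (σ * Equiv.swap a k)).card = w + 1 := h'.1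
      exact ⟨by omega, h2⟩
  rw [hL, Finset.sum_comm]
  simp_rw [Finset.sum_comm (s := (univ : Finset (Equiv.Perm (Fin n)))) (t := (univ : Finset (Fin n)))]
  simp_rw [hmid]
  simp_rw [← Finset.sum_comm (s := (univ : Finset (Equiv.Perm (Fin n)))) (t := (univ : Finset (Fin n)))]
  unfold levelWeight
  rw [Finset.mul_sum]
  refine Finset.sum_le_sum fun σ _ => ?_
  by_cases h : (up j σ).card = w
  · simp only [h, true_and, if_true, ite_and]
    simp only [Finset.sum_ite_mem, Finset.univ_inter, Finset.sum_ite_irrel, Finset.sum_const_zero]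
    have hA := sum_low_le j σ h0 h1
    have hB := sum_high_le j σ h0 h1
    have : ∑ a ∈ low j σ, ∑ k ∈ high j σ, mallowsWeight n β σ *
        (q ^ ((j : ℕ) - max (a : ℕ) (σ a)) * q ^ (min (k : ℕ) (σ k) - (j : ℕ))) =
        ((∑ a ∈ low j σ, q ^ ((j : ℕ) - max (a : ℕ) (σ a))) *
        ∑ k ∈ high j σ, q ^ (min (k : ℕ) (σ k) - (j : ℕ))) * mallowsWeight n β σ := by
      rw [Finset.sum_mul_sum, Finset.sum_mul]
      refine Finset.sum_congr rfl fun a _ => ?_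
      rw [Finset.sum_mul]
      exact Finset.sum_congr rfl fun k _ => by ring
    rw [this]
    have := (weight_pos β σ).le
    have : 0 < 1 - q := by linarith
    gcongr
  · simp [h]

/-- Iterating the recursion would give `1 / (w!)²`; one factor `1 / w!` suffices for summability. -/
lemma levelWeight_le {β : ℝ} (hβ : 0 < β) (j : Fin n) (w : ℕ) :
    levelWeight β j w ≤
      ((2 * Real.exp (-(2 * β)) / (1 - Real.exp (-(2 * β)))) *
        (2 / (1 - Real.exp (-(2 * β))))) ^ w / (w.factorial : ℝ) *
        ∑ τ : Equiv.Perm (Fin n), mallowsWeight n β τ := by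
  set q := Real.exp (-(2 * β)) with hq
  have h0 : 0 ≤ q := (Real.exp_pos _).le
  have h1 : 0 < 1 - q := by
    have : q < 1 := by rw [hq, Real.exp_lt_one_iff]; linarith
    linarith
  have hZ : 0 ≤ ∑ τ : Equiv.Perm (Fin n), mallowsWeight n β τ :=
    Finset.sum_nonneg fun τ _ => (weight_pos β τ).le
  induction w with
  | zero =>
    simp only [pow_zero, Nat.factorial_zero, Nat.cast_one, div_one, one_mul]
    refine Finset.sum_le_sum fun σ _ => ?_
    have := (weight_pos β σ).le
    split_ifs <;> linarith
  | succ w ih =>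
    have hrec := levelWeight_succ_le hβ j w
    rw [← hq] at hrec
    have hL : 0 ≤ levelWeight β j (w + 1) := Finset.sum_nonneg fun σ _ => by
      have := (weight_pos β σ).le
      split_ifs <;> linarith
    have hw : (0 : ℝ) < (w : ℝ) + 1 := by positivity
    have hf : (0 : ℝ) < (w.factorial : ℝ) := by positivity
    generalize hz : (2 * q / (1 - q)) * (2 / (1 - q)) = z at *
    have hz0 : 0 ≤ z := by rw [← hz]; positivity
    have h3 : ((w : ℝ) + 1) * levelWeight β j (w + 1) ≤ z * levelWeight β j w := by
      refine le_trans (mul_le_mul_of_nonneg_right ?_ hL) hrec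
      nlinarith [(Nat.cast_nonneg w : (0 : ℝ) ≤ w)]
    have h4 := h3.trans (mul_le_mul_of_nonneg_left ih hz0)
    rw [Nat.factorial_succ, Nat.cast_mul, Nat.cast_add, Nat.cast_one]
    calc levelWeight β j (w + 1)
        = (((w : ℝ) + 1) * levelWeight β j (w + 1)) / ((w : ℝ) + 1) := by field_simp
      _ ≤ (z * (z ^ w / (w.factorial : ℝ) * ∑ τ : Equiv.Perm (Fin n), mallowsWeight n β τ))
            / ((w : ℝ) + 1) := by gcongr
      _ = _ := by
          rw [pow_succ]
          field_simp

/-! ### The probability space and the conditional tail bound -/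

lemma expMeasure_Ici {r : ℝ} (hr : 0 < r) {d : ℝ} (hd : 0 ≤ d) :
    ProbabilityTheory.expMeasure r (Set.Ici d) = ENNReal.ofReal (Real.exp (-(r * d))) := by
  have := ProbabilityTheory.isProbabilityMeasure_expMeasure hr
  have : NullSingletonClass (ProbabilityTheory.expMeasure r) := by
    unfold ProbabilityTheory.expMeasure ProbabilityTheory.gammaMeasure
    infer_instance
  have h := ProbabilityTheory.cdf_expMeasure_eq hr d
  rw [if_pos hd, ProbabilityTheory.cdf_eq_real] at h
  rw [← measure_congr Ioi_ae_eq_Ici, ← Set.compl_Iic, ← ofReal_measureReal,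
    probReal_compl_eq_one_sub measurableSet_Iic, h]
  congr 1
  ring

lemma measurable_Nval (j : Fin n) :
    Measurable fun ω : Equiv.Perm (Fin n) × (Fin n → ℝ) => Nval n ω j := by
  unfold Nval Hset
  simp_rw [Finset.card_filter]
  refine measurable_const.add (Finset.measurable_sum _ fun k _ => ?_)
  refine Measurable.ite ?_ measurable_const measurable_const
  have hb : Measurable fun ω : Equiv.Perm (Fin n) × (Fin n → ℝ) => bVal n ω k := by
    unfold bVal
    have h1 : Measurable fun σ : Equiv.Perm (Fin n) => ((σ k : ℕ) : ℝ) := measurable_from_top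
    exact (measurable_const.max (h1.comp measurable_fst)).add
      ((measurable_pi_apply k).comp measurable_snd)
  exact (MeasurableSet.const _).inter (measurableSet_le measurable_const hb)

lemma hitRun_apply (β : ℝ) (hβ : 0 < β) {A : Set (Equiv.Perm (Fin n) × (Fin n → ℝ))}
    (hA : MeasurableSet A) :
    hitRunMeasure n β A = ∑ σ : Equiv.Perm (Fin n), ENNReal.ofReal (mallowsProb n β σ) *
      (Measure.pi fun _ : Fin n => ProbabilityTheory.expMeasure (2 * β)) (Prod.mk σ ⁻¹' A) := by
  have := ProbabilityTheory.isProbabilityMeasure_expMeasure (r := 2 * β) (by linarith)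
  unfold hitRunMeasure mallowsMeasure
  rw [Measure.prod_apply hA, lintegral_finsetSum_measure]
  refine Finset.sum_congr rfl fun σ _ => ?_
  rw [lintegral_smul_measure, lintegral_dirac' _ measurable_from_top, smul_eq_mul]

/-- The tail bound conditionally on `σ₀ = σ`: at most `#(up j σ)` elements of `H_j` are crossings, so at
least `u - #(up j σ)` elements (truncated subtraction) lie in `low j σ`, and a union bound over subsets
of that size applies. -/
lemma pi_tail_le {β : ℝ} (hβ : 0 < β) (j : Fin n) (σ : Equiv.Perm (Fin n)) (u : ℕ) :
    (Measure.pi fun _ : Fin n => ProbabilityTheory.expMeasure (2 * β))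
        (Prod.mk σ ⁻¹' {ω | 1 + u ≤ Nval n ω j}) ≤
      ENNReal.ofReal ((2 * Real.exp (-(2 * β)) / (1 - Real.exp (-(2 * β)))) ^
        (u - (up j σ).card)) := by
  have := ProbabilityTheory.isProbabilityMeasure_expMeasure (r := 2 * β) (by linarith)
  set q := Real.exp (-(2 * β)) with hq
  have h0 : 0 ≤ q := (Real.exp_pos _).le
  have h1 : q < 1 := by rw [hq, Real.exp_lt_one_iff]; linarith
  set v := u - (up j σ).card with hv
  set d : Fin n → ℕ := fun k => (j : ℕ) - max (k : ℕ) (σ k) with hd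
  have hsub : (Prod.mk σ ⁻¹' {ω | 1 + u ≤ Nval n ω j}) ⊆
      ⋃ S ∈ (low j σ).powersetCard v, Set.pi (S : Set (Fin n)) fun k => Set.Ici ((d k : ℕ) : ℝ) := by
    intro E hE
    have hE' : u ≤ (Hset n (σ, E) j).card := by
      have : 1 + u ≤ 1 + (Hset n (σ, E) j).card := hE
      omega
    have hcard : v ≤ (Hset n (σ, E) j \ up j σ).card := by
      have := Finset.le_card_sdiff (up j σ) (Hset n (σ, E) j)
      omega
    obtain ⟨S, hS, hSc⟩ := Finset.exists_subset_card_eq hcard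
    have hmem : ∀ k ∈ S, k < j ∧ σ k < j ∧ ((j : ℕ) : ℝ) ≤ bVal n (σ, E) k := by
      intro k hk
      have := hS hk
      rw [Finset.mem_sdiff, mem_up, Hset, Finset.mem_filter] at this
      obtain ⟨⟨-, h2, h3⟩, h4⟩ := this
      exact ⟨h2, lt_of_not_ge fun h => h4 ⟨h2, h⟩, h3⟩
    refine Set.mem_biUnion (x := S) ?_ ?_
    · exact Finset.mem_powersetCard.2
        ⟨fun k hk => mem_low.2 ⟨(hmem k hk).1, (hmem k hk).2.1⟩, hSc⟩
    · intro k hk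
      obtain ⟨h2, h3, h4⟩ := hmem k hk
      rw [Fin.lt_def] at h2 h3
      simp only [bVal] at h4
      rw [Set.mem_Ici, hd, Nat.cast_sub (by omega), Nat.cast_max]
      linarith
  refine (measure_mono hsub).trans ((measure_biUnion_finset_le _ _).trans ?_)
  have hS : ∀ S : Finset (Fin n), (Measure.pi fun _ : Fin n => ProbabilityTheory.expMeasure (2 * β))
      (Set.pi (S : Set (Fin n)) fun k => Set.Ici ((d k : ℕ) : ℝ)) =
      ENNReal.ofReal (∏ k ∈ S, q ^ d k) := by
    intro S
    rw [Measure.pi_pi_finset, ENNReal.ofReal_prod_of_nonneg fun i _ => pow_nonneg h0 _]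
    refine Finset.prod_congr rfl fun k _ => ?_
    rw [expMeasure_Ici (by linarith) (Nat.cast_nonneg _), hq, ← Real.exp_nat_mul]
    congr 2
    ring
  simp_rw [hS]
  rw [← ENNReal.ofReal_sum_of_nonneg fun S _ => Finset.prod_nonneg fun i _ => pow_nonneg h0 _]
  refine ENNReal.ofReal_le_ofReal ?_
  refine (sum_powersetCard_prod_le _ _ (fun i => pow_nonneg h0 _) v).trans ?_
  exact pow_le_pow_left₀ (Finset.sum_nonneg fun i _ => pow_nonneg h0 _) (sum_low_le j σ h0 h1) v

/-! ### Averaging over the permutation -/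

lemma sum_weight_pos (β : ℝ) : 0 < ∑ τ : Equiv.Perm (Fin n), mallowsWeight n β τ :=
  Finset.sum_pos (fun τ _ => weight_pos β τ) Finset.univ_nonempty

lemma sum_prob (β : ℝ) : ∑ σ : Equiv.Perm (Fin n), mallowsProb n β σ = 1 := by
  unfold mallowsProb
  rw [← Finset.sum_div, div_self (sum_weight_pos β).ne']

lemma prob_nonneg (β : ℝ) (σ : Equiv.Perm (Fin n)) : 0 ≤ mallowsProb n β σ :=
  div_nonneg (weight_pos β σ).le (sum_weight_pos β).le

lemma hitRun_le_one {β : ℝ} (hβ : 0 < β) (A : Set (Equiv.Perm (Fin n) × (Fin n → ℝ))) :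
    hitRunMeasure n β A ≤ 1 := by
  have := ProbabilityTheory.isProbabilityMeasure_expMeasure (r := 2 * β) (by linarith)
  refine (measure_mono (Set.subset_univ A)).trans ?_
  rw [hitRun_apply β hβ MeasurableSet.univ]
  simp only [Set.preimage_univ, measure_univ, mul_one]
  rw [← ENNReal.ofReal_sum_of_nonneg fun σ _ => prob_nonneg β σ, sum_prob, ENNReal.ofReal_one]

/-- Averaging the conditional tail bound over `σ₀`, split by the number `w` of crossings. With `x` the
base of the power and `y = 2 / (1 - e^{-2β})`, level `w` contributes at most
`(x y)^w / w! * x^(u - w) ≤ y^w / w! * x^u`; the hypothesis `x ≤ 1` also forces `y ≤ 3`. -/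
lemma sum_prob_pow_le {β : ℝ} (hβ : 0 < β) (j : Fin n) (u : ℕ)
    (hx : 2 * Real.exp (-(2 * β)) / (1 - Real.exp (-(2 * β))) ≤ 1) :
    ∑ σ : Equiv.Perm (Fin n), mallowsProb n β σ *
        (2 * Real.exp (-(2 * β)) / (1 - Real.exp (-(2 * β)))) ^ (u - (up j σ).card) ≤
      Real.exp 3 * (2 * Real.exp (-(2 * β)) / (1 - Real.exp (-(2 * β)))) ^ u := by
  have hlev := fun w => levelWeight_le hβ j w
  set q := Real.exp (-(2 * β)) with hq
  have h0 : 0 ≤ q := (Real.exp_pos _).le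
  have h1 : 0 < 1 - q := by
    have : q < 1 := by rw [hq, Real.exp_lt_one_iff]; linarith
    linarith
  have hy : 2 / (1 - q) ≤ 3 := by
    rw [div_le_one h1] at hx
    rw [div_le_iff₀ h1]
    linarith
  have hx0 : 0 ≤ 2 * q / (1 - q) := by positivity
  generalize 2 * q / (1 - q) = x at *
  have hy0 : 0 ≤ 2 / (1 - q) := by positivity
  generalize 2 / (1 - q) = y at *
  have hZ := sum_weight_pos (n := n) β
  set Z := ∑ τ : Equiv.Perm (Fin n), mallowsWeight n β τ with hZd
  have hsplit : ∑ σ : Equiv.Perm (Fin n), mallowsProb n β σ * x ^ (u - (up j σ).card) =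
      ∑ w ∈ range (n + 1), levelWeight β j w / Z * x ^ (u - w) := by
    have hc : ∀ σ : Equiv.Perm (Fin n), (up j σ).card ∈ range (n + 1) := fun σ => by
      have := Finset.card_le_univ (up j σ)
      rw [Fintype.card_fin] at this
      rw [Finset.mem_range]
      omega
    simp only [levelWeight, Finset.sum_div, Finset.sum_mul]
    rw [Finset.sum_comm]
    refine Finset.sum_congr rfl fun σ _ => ?_
    rw [Finset.sum_eq_single_of_mem _ (hc σ)]
    · rw [if_pos rfl]; rfl
    · intro w _ hw
      rw [if_neg (Ne.symm hw)]
      simp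
  rw [hsplit]
  calc ∑ w ∈ range (n + 1), levelWeight β j w / Z * x ^ (u - w)
      ≤ ∑ w ∈ range (n + 1), 3 ^ w / (w.factorial : ℝ) * x ^ u := by
        refine Finset.sum_le_sum fun w _ => ?_
        calc levelWeight β j w / Z * x ^ (u - w)
            ≤ ((x * y) ^ w / (w.factorial : ℝ)) * x ^ (u - w) := by
              refine mul_le_mul_of_nonneg_right ?_ (pow_nonneg hx0 _)
              rw [div_le_iff₀ hZ]
              exact hlev w
          _ = y ^ w / (w.factorial : ℝ) * x ^ (w + (u - w)) := by
              rw [mul_pow, pow_add]; ring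
          _ ≤ 3 ^ w / (w.factorial : ℝ) * x ^ u := by
              have := pow_le_pow_of_le_one hx0 hx (show u ≤ w + (u - w) by omega)
              gcongr
    _ ≤ Real.exp 3 * x ^ u := by
        rw [← Finset.sum_mul]
        gcongr
        exact Real.sum_le_exp_of_nonneg (by norm_num) _

end Mallows

/-- For every `c₀ > 0` there is `C₀ ≥ 1` (depending only on `c₀`) such that for all
`n ≥ 1`, `β ≥ c₀`, `j ∈ [n]`, and positive integers `u`:
`P(N_j ≥ 1 + u) ≤ C₀ (2e^{-2β}/(1 - e^{-2β}))^u`. -/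
theorem statement11 (c₀ : ℝ) (hc₀ : 0 < c₀) :
    ∃ C₀ : ℝ, 1 ≤ C₀ ∧
      ∀ n : ℕ, 0 < n → ∀ β : ℝ, c₀ ≤ β → ∀ j : Fin n, ∀ u : ℕ, 0 < u →
        hitRunMeasure n β {ω | 1 + u ≤ Nval n ω j}
          ≤ ENNReal.ofReal
              (C₀ * (2 * Real.exp (-(2 * β)) / (1 - Real.exp (-(2 * β)))) ^ u) := by
  refine ⟨Real.exp 3, Real.one_le_exp (by norm_num), ?_⟩
  intro n _ β hβ' j u _
  have hβ : 0 < β := hc₀.trans_le hβ'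
  rcases le_total (2 * Real.exp (-(2 * β)) / (1 - Real.exp (-(2 * β)))) 1 with hx | hx
  · have hmeas : MeasurableSet {ω | 1 + u ≤ Nval n ω j} :=
      Mallows.measurable_Nval j measurableSet_Ici
    have hq1 : Real.exp (-(2 * β)) < 1 := by rw [Real.exp_lt_one_iff]; linarith
    have hx0 : 0 ≤ 2 * Real.exp (-(2 * β)) / (1 - Real.exp (-(2 * β))) :=
      div_nonneg (by positivity) (by linarith)
    rw [Mallows.hitRun_apply β hβ hmeas]
    refine le_trans ?_ (ENNReal.ofReal_le_ofReal (Mallows.sum_prob_pow_le hβ j u hx))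
    rw [ENNReal.ofReal_sum_of_nonneg fun σ _ =>
      mul_nonneg (Mallows.prob_nonneg β σ) (pow_nonneg hx0 _)]
    refine Finset.sum_le_sum fun σ _ => ?_
    rw [ENNReal.ofReal_mul (Mallows.prob_nonneg β σ)]
    gcongr
    exact Mallows.pi_tail_le hβ j σ u
  -- When the base is at least `1`, so is the right-hand side.
  · refine (Mallows.hitRun_le_one hβ _).trans ?_
    rw [← ENNReal.ofReal_one]
    refine ENNReal.ofReal_le_ofReal ?_
    exact one_le_mul_of_one_le_of_one_le (Real.one_le_exp (by norm_num)) (one_le_pow₀ hx)
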